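/- The expectation of H_τ/τ is given by the series E[H_τ/τ] = ∑_{k≥0} (1/(2·4^k)) · (C(2k, k)/(k+1)) · ((k+1)/(2k+1)) = (1/2) ∑_{k≥0} C(2k, k)/(4^k · (2k+1)). -/

import Mathlib

open MeasureTheory ProbabilityTheory
open scoped Classical

/-- number of free walks of length n ending at x -/
def wcnt : ℕ → ℤ → ℤ
  | 0, x => if x = 0 then 1 else 0
  | n + 1, x => wcnt n (x - 1) + wcnt n (x + 1)

lemma wcnt_symm (n : ℕ) : ∀ x, wcnt n (-x) = wcnt n x := by
  induction n with
  | zero => intro x; simp [wcnt]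
  | succ n ih =>
    intro x
    simp only [wcnt]
    rw [show -x - 1 = -(x + 1) by ring, show -x + 1 = -(x - 1) by ring, ih, ih, add_comm]

lemma wcnt_out (n : ℕ) : ∀ x : ℤ, x < -n → wcnt n x = 0 := by
  induction n with
  | zero => intro x hx; simp [wcnt]; rintro rfl; simp at hx
  | succ n ih =>
    intro x hx
    push_cast at hx
    simp only [wcnt]
    rw [ih _ (by linarith), ih _ (by linarith), add_zero]

lemma wcnt_odd (n : ℕ) : ∀ x : ℤ, (n + x) % 2 = 1 → wcnt n x = 0 := by
  induction n with
  | zero => intro x hx; simp [wcnt]; rintro rfl; simp at hx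
  | succ n ih =>
    intro x hx
    push_cast at hx
    simp only [wcnt]
    rw [ih _ (by omega), ih _ (by omega), add_zero]

lemma wcnt_choose (n : ℕ) : ∀ i : ℕ, wcnt n (2 * i - n) = n.choose i := by
  induction n with
  | zero => 
    intro i
    rcases i with _ | i
    · simp [wcnt]
    · simp [wcnt]; omega
  | succ n ih =>
    intro i
    simp only [wcnt]
    rcases i with _ | i
    · have h1 := ih 0
      rw [wcnt_out n _ (by push_cast; linarith)]
      simp at h1 ⊢
      exact h1
    · have h1 := ih i
      have h2 := ih (i+1)
      rw [Nat.choose_succ_succ]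
      push_cast at *
      rw [← h1, ← h2]
      congr 2 <;> ring

lemma wcnt_catalan (k : ℕ) :
    ((wcnt (2 * k) 0 - wcnt (2 * k) 2 : ℤ) : ℝ) = ((2 * k).choose k : ℝ) / (k + 1) := by
  have h1 := wcnt_choose (2 * k) k
  have h2 := wcnt_choose (2 * k) (k + 1)
  have h3 := Nat.choose_succ_right_eq (2 * k) k
  push_cast at h1 h2
  rw [show (2 * (k:ℤ) - 2 * k) = 0 by ring] at h1
  rw [show (2 * ((k:ℤ) + 1) - 2 * k) = 2 by ring] at h2
  rw [h1, h2]
  rw [show 2 * k - k = k by omega] at h3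
  have h4 : ((2 * k).choose (k + 1) : ℝ) * (k + 1) = (2 * k).choose k * k := by exact_mod_cast h3
  have : (k + 1 : ℝ) ≠ 0 := by positivity
  push_cast
  field_simp
  linarith

section
variable {Ω : Type*} [MeasurableSpace Ω] (P : Measure Ω) [IsProbabilityMeasure P]
    (X : ℕ → Ω → ℤ) (hmeas : ∀ i, Measurable (X i))
    (hindep : iIndepFun X P)
    (hheads : ∀ i, P {ω | X i ω = 1} = 1/2)
    (htails : ∀ i, P {ω | X i ω = -1} = 1/2)

lemma pre_eq (n : ℕ) (A : Set Ω)
    (hA : ∀ ω ω', (∀ i < n, X i ω = X i ω') → ω ∈ A → ω' ∈ A) :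
    A = (fun ω (i : Finset.range n) => X i ω) ⁻¹' ((fun ω (i : Finset.range n) => X i ω) '' A) := by
  ext ω
  constructor
  · intro h; exact ⟨ω, h, rfl⟩
  · rintro ⟨ω', h, h'⟩
    refine hA ω' ω (fun i hi => ?_) h
    exact congrFun h' ⟨i, Finset.mem_range.2 hi⟩

include hmeas in
lemma meas_A (n : ℕ) (A : Set Ω)
    (hA : ∀ ω ω', (∀ i < n, X i ω = X i ω') → ω ∈ A → ω' ∈ A) : MeasurableSet A := by
  rw [pre_eq X n A hA]
  have hY : Measurable (fun ω (i : Finset.range n) => X i ω) :=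
    measurable_pi_lambda _ (fun i => hmeas i)
  exact hY MeasurableSet.of_discrete

include hmeas hindep in
lemma indep_A (n : ℕ) (A : Set Ω) (c : ℤ)
    (hA : ∀ ω ω', (∀ i < n, X i ω = X i ω') → ω ∈ A → ω' ∈ A) :
    P.real (A ∩ {ω | X n ω = c}) = P.real A * P.real {ω | X n ω = c} := by
  have h := hindep.indepFun_finset (Finset.range n) {n} (by simp) hmeas
  have h2 := h.measure_inter_preimage_eq_mul
    ((fun ω (i : Finset.range n) => X i ω) '' A) {v | v ⟨n, by simp⟩ = c}
    MeasurableSet.of_discrete MeasurableSet.of_discrete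
  rw [← pre_eq X n A hA] at h2
  simp only [Measure.real]
  rw [← ENNReal.toReal_mul]
  congr 1

include hmeas hheads htails in
lemma ae_pm : ∀ᵐ ω ∂P, ∀ i, X i ω = 1 ∨ X i ω = -1 := by
  rw [ae_all_iff]
  intro i
  have hm1 : MeasurableSet {ω | X i ω = 1} := hmeas i (measurableSet_singleton 1)
  have hm2 : MeasurableSet {ω | X i ω = -1} := hmeas i (measurableSet_singleton (-1))
  have : P ({ω | X i ω = 1} ∪ {ω | X i ω = -1}) = 1 := by
    rw [measure_union _ hm2, hheads, htails, ENNReal.add_halves]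
    rw [Set.disjoint_left]
    intro ω h1 h2
    simp only [Set.mem_ofPred_eq] at h1 h2
    omega
  exact (prob_compl_eq_zero_iff (hm1.union hm2)).2 this

def AA (n : ℕ) (x : ℤ) : Set Ω :=
  {ω | (∀ j ≤ n, ∑ i ∈ Finset.range j, X i ω ≤ 0) ∧ ∑ i ∈ Finset.range n, X i ω = -x}

lemma AA_dep (n : ℕ) (x : ℤ) (ω ω' : Ω) (h : ∀ i < n, X i ω = X i ω') (hω : ω ∈ AA X n x) :
    ω' ∈ AA X n x := by
  have key : ∀ j ≤ n, ∑ i ∈ Finset.range j, X i ω' = ∑ i ∈ Finset.range j, X i ω := by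
    intro j hj
    refine Finset.sum_congr rfl (fun i hi => (h i ?_).symm)
    have := Finset.mem_range.1 hi
    omega
  exact ⟨fun j hj => by rw [key j hj]; exact hω.1 j hj, by rw [key n le_rfl]; exact hω.2⟩

include hmeas hindep hheads htails in
lemma prob_AA (n : ℕ) : ∀ x : ℤ, -1 ≤ x →
    P.real (AA X n x) = ((wcnt n x - wcnt n (x + 2) : ℤ) : ℝ) / 2 ^ n := by
  induction n with
  | zero =>
    intro x hx
    by_cases h0 : x = 0
    · subst h0
      have : AA X 0 0 = Set.univ := by ext ω; simp [AA]
      rw [this]; simp [wcnt]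
    · have : AA X 0 x = ∅ := by ext ω; simp [AA]; omega
      rw [this]
      by_cases h1 : x + 2 = 0
      · omega
      · simp [wcnt, h0, h1]
  | succ n ih =>
    intro x hx
    by_cases h1 : x = -1
    · subst h1
      have : AA X (n+1) (-1) = ∅ := by
        ext ω
        simp only [AA, Set.mem_ofPred_eq, Set.mem_empty_iff_false, iff_false]
        rintro ⟨h, h'⟩
        have := h (n+1) le_rfl
        omega
      rw [this, wcnt_symm (n+1) 1]; simp
    have hae : AA X (n+1) x =ᵐ[P] ((AA X n (x-1) ∩ {ω | X n ω = -1}) ∪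
        (AA X n (x+1) ∩ {ω | X n ω = 1}) : Set Ω) := by
      filter_upwards [ae_pm P X hmeas hheads htails] with ω hω
      apply propext
      change ω ∈ AA X (n+1) x ↔ ω ∈ ((AA X n (x-1) ∩ {ω | X n ω = -1}) ∪
        (AA X n (x+1) ∩ {ω | X n ω = 1}) : Set Ω)
      simp only [AA, Set.mem_union, Set.mem_inter_iff, Set.mem_ofPred_eq, Finset.sum_range_succ]
      constructor
      · rintro ⟨h, h'⟩
        rcases hω n with h2 | h2
        · exact Or.inr ⟨⟨fun j hj => h j (by omega), by omega⟩, h2⟩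
        · exact Or.inl ⟨⟨fun j hj => h j (by omega), by omega⟩, h2⟩
      · have aux : (∀ j ≤ n, ∑ i ∈ Finset.range j, X i ω ≤ 0) →
            ∑ i ∈ Finset.range n, X i ω + X n ω = -x →
            ∀ j ≤ n + 1, ∑ i ∈ Finset.range j, X i ω ≤ 0 := by
          intro h h' j hj
          rcases Nat.lt_or_ge n j with h3 | h3
          · have : j = n + 1 := by omega
            subst this
            rw [Finset.sum_range_succ]; omega
          · exact h j h3
        rintro (⟨⟨h, h'⟩, h2⟩ | ⟨⟨h, h'⟩, h2⟩)
        · exact ⟨aux h (by omega), by omega⟩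
        · exact ⟨aux h (by omega), by omega⟩
    have e1 := indep_A P X hmeas hindep n (AA X n (x-1)) (-1) (AA_dep X n (x-1))
    have e2 := indep_A P X hmeas hindep n (AA X n (x+1)) 1 (AA_dep X n (x+1))
    have p1 : P.real {ω | X n ω = 1} = 1/2 := by simp [Measure.real, hheads]
    have p2 : P.real {ω | X n ω = -1} = 1/2 := by simp [Measure.real, htails]
    rw [measureReal_congr hae, measureReal_union, e1, e2, p1, p2, ih _ (by omega), ih _ (by omega)]
    · simp only [wcnt]
      rw [show x - 1 + 2 = x + 1 by ring, show x + 2 - 1 = x + 1 by ring,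
        show x + 1 + 2 = x + 2 + 1 by ring]
      push_cast
      field_simp
      ring
    · rw [Set.disjoint_left]
      rintro ω ⟨_, h1⟩ ⟨_, h2⟩
      simp only [Set.mem_ofPred_eq] at h1 h2
      omega
    · exact (meas_A X hmeas n _ (AA_dep X n (x+1))).inter (hmeas n (measurableSet_singleton 1))

include hmeas hindep hheads htails in
lemma prob_tau (τ : Ω → ℕ)
    (hτ : ∀ ω, τ ω = sInf {n | 1 ≤ n ∧ (∑ i ∈ Finset.range n, X i ω) = 1}) (n : ℕ) :
    P.real {ω | τ ω = n + 1} = ((wcnt n 0 - wcnt n 2 : ℤ) : ℝ) / (2 * 2 ^ n) := by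
  have hae : {ω | τ ω = n + 1} =ᵐ[P] (AA X n 0 ∩ {ω | X n ω = 1} : Set Ω) := by
    filter_upwards [ae_pm P X hmeas hheads htails] with ω hω
    apply propext
    change τ ω = n + 1 ↔ ω ∈ (AA X n 0 ∩ {ω | X n ω = 1} : Set Ω)
    simp only [AA, Set.mem_inter_iff, Set.mem_ofPred_eq]
    rw [hτ ω]
    constructor
    · intro h
      have hne := Nat.nonempty_of_sInf_eq_succ h
      have hmem := Nat.sInf_mem hne
      rw [h] at hmem
      have hlt : ∀ j, 1 ≤ j → j ≤ n → ∑ i ∈ Finset.range j, X i ω ≠ 1 := by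
        intro j hj hjn hs
        exact Nat.notMem_of_lt_sInf (by rw [h]; omega) (show j ∈ {n | 1 ≤ n ∧ (∑ i ∈ Finset.range n, X i ω) = 1} from ⟨hj, hs⟩)
      have hle : ∀ j ≤ n, ∑ i ∈ Finset.range j, X i ω ≤ 0 := by
        intro j
        induction j with
        | zero => simp
        | succ j ih =>
          intro hj
          have h1 := ih (by omega)
          have h2 := hlt (j+1) (by omega) hj
          rw [Finset.sum_range_succ] at h2 ⊢
          rcases hω j with h3 | h3 <;> omega
      have h1 := hle n le_rfl
      have h2 := hmem.2
      rw [Finset.sum_range_succ] at h2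
      rcases hω n with h3 | h3
      · exact ⟨⟨hle, by omega⟩, h3⟩
      · omega
    · rintro ⟨⟨h, h'⟩, h2⟩
      have hmem : n + 1 ∈ {n | 1 ≤ n ∧ (∑ i ∈ Finset.range n, X i ω) = 1} :=
        ⟨by omega, by rw [Finset.sum_range_succ]; omega⟩
      refine le_antisymm (Nat.sInf_le hmem) ?_
      have hm := Nat.sInf_mem ⟨_, hmem⟩
      by_contra hc
      have := h _ (Nat.lt_succ_iff.1 (not_le.1 hc))
      have := hm.2
      omega
  have e2 := indep_A P X hmeas hindep n (AA X n 0) 1 (AA_dep X n 0)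
  have p1 : P.real {ω | X n ω = 1} = 1/2 := by simp [Measure.real, hheads]
  rw [measureReal_congr hae, e2, p1, prob_AA P X hmeas hindep hheads htails n 0 (by norm_num)]
  simp only [zero_add]
  field_simp

lemma tau_meas (hmeas : ∀ i, Measurable (X i)) (τ : Ω → ℕ)
    (hτ : ∀ ω, τ ω = sInf {n | 1 ≤ n ∧ (∑ i ∈ Finset.range n, X i ω) = 1}) : Measurable τ := by
  have hs : ∀ n, Measurable (fun ω => ∑ i ∈ Finset.range n, X i ω) := fun n =>
    Finset.measurable_sum _ (fun i _ => hmeas i)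
  have hE : ∀ n, MeasurableSet {ω | 1 ≤ n ∧ (∑ i ∈ Finset.range n, X i ω) = 1} := fun n =>
    (MeasurableSet.const _).inter (hs n (measurableSet_singleton 1))
  have hsucc : ∀ n, MeasurableSet {ω | τ ω = n + 1} := by
    intro n
    have : {ω | τ ω = n + 1} = {ω | 1 ≤ n + 1 ∧ (∑ i ∈ Finset.range (n+1), X i ω) = 1} ∩
        ⋂ j ∈ Finset.range (n+1), {ω | 1 ≤ j ∧ (∑ i ∈ Finset.range j, X i ω) = 1}ᶜ := by
      ext ω
      simp only [Set.mem_inter_iff, Set.mem_iInter, Finset.mem_range]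
      change τ ω = n + 1 ↔ _
      rw [hτ ω]
      constructor
      · intro h
        have hmem := Nat.sInf_mem (Nat.nonempty_of_sInf_eq_succ h)
        rw [h] at hmem
        exact ⟨hmem, fun j hj hc => Nat.notMem_of_lt_sInf
          (s := {n | 1 ≤ n ∧ (∑ i ∈ Finset.range n, X i ω) = 1}) (by rw [h]; exact hj) hc⟩
      · rintro ⟨h, h'⟩
        refine le_antisymm (Nat.sInf_le h) ?_
        by_contra hc
        have hm := Nat.sInf_mem
          (s := {n | 1 ≤ n ∧ (∑ i ∈ Finset.range n, X i ω) = 1}) ⟨n + 1, h⟩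
        exact h' _ (not_le.1 hc) hm
    rw [this]
    exact (hE _).inter (Finset.measurableSet_biInter _ (fun j _ => (hE j).compl))
  refine measurable_to_countable' (fun n => ?_)
  rcases n with _ | n
  · have : τ ⁻¹' {0} = (⋃ n, {ω | τ ω = n + 1})ᶜ := by
      ext ω
      simp only [Set.mem_preimage, Set.mem_singleton_iff, Set.mem_compl_iff, Set.mem_iUnion,
        Set.mem_ofPred_eq, not_exists]
      constructor
      · intro h; omega
      · intro h
        by_contra hc
        exact h (τ ω - 1) (by omega)
    rw [this]
    exact (MeasurableSet.iUnion hsucc).compl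
  · exact hsucc n

lemma heads_eq (ω : Ω) (hω : ∀ i, X i ω = 1 ∨ X i ω = -1) (n : ℕ) :
    ∑ i ∈ Finset.range n, X i ω =
      2 * (((Finset.range n).filter (fun i => X i ω = 1)).card : ℤ) - n := by
  induction n with
  | zero => simp
  | succ n ih =>
    rw [Finset.sum_range_succ, Finset.range_add_one, Finset.filter_insert, ih]
    rcases hω n with h | h
    · rw [if_pos h, Finset.card_insert_of_notMem (by simp)]; push_cast; omega
    · rw [if_neg (by omega)]; push_cast; omega

end

/-- The expectation of H_τ/τ is given by the series
∑_{k≥0} (1/(2·4ᵏ)) · (C(2k,k)/(k+1)) · ((k+1)/(2k+1)),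
which equals (1/2) ∑_{k≥0} C(2k,k)/(4ᵏ·(2k+1)). -/
theorem expected_proportion_series
{Ω : Type*} [MeasurableSpace Ω] (P : Measure Ω) [IsProbabilityMeasure P]
    (X : ℕ → Ω → ℤ) (hmeas : ∀ i, Measurable (X i))
    (hindep : iIndepFun X P)
    (hheads : ∀ i, P {ω | X i ω = 1} = 1/2)
    (htails : ∀ i, P {ω | X i ω = -1} = 1/2)
    (τ : Ω → ℕ) (hτ : ∀ ω, τ ω = sInf {n | 1 ≤ n ∧ (∑ i ∈ Finset.range n, X i ω) = 1})
(H : ℕ → Ω → ℕ)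
    (hH : ∀ n ω, H n ω = ((Finset.range n).filter (fun i => X i ω = 1)).card) :
    (∫ ω, ((H (τ ω) ω : ℝ) / (τ ω : ℝ)) ∂P =
      ∑' k : ℕ, (1 / (2 * 4 ^ k)) * (((2 * k).choose k : ℝ) / (k + 1)) *
        ((k + 1) / (2 * k + 1))) ∧
    (∑' k : ℕ, (1 / (2 * 4 ^ k)) * (((2 * k).choose k : ℝ) / (k + 1)) *
        ((k + 1) / (2 * k + 1)) =
      (1 / 2) * ∑' k : ℕ, ((2 * k).choose k : ℝ) / (4 ^ k * (2 * k + 1))) := by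
  refine ⟨?_, ?_⟩
  · have hτm := tau_meas X hmeas τ hτ
    let g : ℕ → ℝ := fun n => (((n : ℝ) + 1) / 2) / n
    have hg : ∀ n, ‖g n‖ ≤ 1 := by
      intro n
      rw [Real.norm_of_nonneg (by positivity)]
      rcases n with _ | n
      · simp [g]
      · simp only [g]
        push_cast
        rw [div_le_one (by positivity)]
        have : (0:ℝ) ≤ n := by positivity
        linarith
    have h1 : ∫ ω, ((H (τ ω) ω : ℝ) / (τ ω : ℝ)) ∂P = ∫ ω, g (τ ω) ∂P := by
      refine integral_congr_ae ?_
      filter_upwards [ae_pm P X hmeas hheads htails] with ω hω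
      by_cases h0 : τ ω = 0
      · simp [g, h0]
      · obtain ⟨n, hn⟩ := Nat.exists_eq_succ_of_ne_zero h0
        have h := hτ ω
        rw [hn] at h
        have hmem := Nat.sInf_mem (Nat.nonempty_of_sInf_eq_succ h.symm)
        rw [← h] at hmem
        have h2 := hmem.2
        rw [heads_eq X ω hω, ← hH, ← hn] at h2
        have h3 : (2 * (H (τ ω) ω : ℝ) - τ ω) = 1 := by exact_mod_cast h2
        simp only [g]
        congr 1
        linarith
    have hint : Integrable g (P.map τ) := by
      have : IsProbabilityMeasure (P.map τ) := Measure.isProbabilityMeasure_map hτm.aemeasurable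
      exact Integrable.of_bound (measurable_of_countable g).aestronglyMeasurable 1
        (Filter.Eventually.of_forall hg)
    rw [h1, ← integral_map hτm.aemeasurable (measurable_of_countable g).aestronglyMeasurable,
      integral_countable hint]
    have hreal : ∀ n, (P.map τ).real {n} = P.real {ω | τ ω = n} := by
      intro n
      rw [map_measureReal_apply hτm (measurableSet_singleton n)]
      rfl
    have hinj : Function.Injective (fun k : ℕ => 2 * k + 1) := by
      intro a b h
      simp only at h
      omega
    rw [← hinj.tsum_eq]
    · refine tsum_congr (fun k => ?_)
      rw [hreal, prob_tau P X hmeas hindep hheads htails τ hτ (2 * k), wcnt_catalan]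
      simp only [g, smul_eq_mul]
      push_cast
      rw [pow_mul]
      norm_num
      field_simp
      ring
    · intro n hn
      by_contra hc
      apply hn
      simp only
      rcases n with _ | n
      · simp [g]
      · have hodd : n % 2 = 1 := by
          by_contra h
          exact hc ⟨n / 2, by simp only; omega⟩
        rw [hreal, prob_tau P X hmeas hindep hheads htails τ hτ n,
          wcnt_odd n 0 (by omega), wcnt_odd n 2 (by omega)]
        simp
  · rw [← tsum_mul_left]
    refine tsum_congr (fun k => ?_)
    field_simp
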